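/- Let n ≥ 2 and 1 ≤ r < n be integers and let h be a homeomorphism of the Cantor space 𝔠_{n,r}. Then h⁻¹ G_{n,r} h = G_{n,r} (i.e., conjugation by h induces an automorphism of the Higman–Thompson group G_{n,r}) if and only if there exists m ∈ ℕ such that for every w ∈ List (Fin n) of length m and all words ν, η ∈ W_{n,r}, the homeomorphism h acts in the same fashion on U_{ν⌢w} and U_{η⌢w}, and h⁻¹ acts in the same fashion on U_{ν⌢w} and U_{η⌢w}. (This is the bi-synchronizing characterisation of Aut(G_{n,r}).) -/

import Mathlib

open Set

namespace HigmanAut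

/-- The one-sided infinite sequence space `𝔠_n` on `n` letters. -/
abbrev Cn (n : ℕ) : Type := ℕ → Fin n

/-- The Cantor space `𝔠_{n,r} = Fin r × (ℕ → Fin n)` (with the product topology,
`Fin r` and `Fin n` discrete). -/
abbrev CNR (n r : ℕ) : Type := Fin r × Cn n

/-- A word: a letter from `Fin r` together with a finite list over `Fin n`. -/
abbrev Word (n r : ℕ) : Type := Fin r × List (Fin n)

/-- Self-homeomorphisms of `𝔠_{n,r}`. -/
abbrev Homeo (n r : ℕ) : Type := CNR n r ≃ₜ CNR n r

/-- Append a finite list to a word: `ν⌢w`. -/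
def wApp {n r : ℕ} (ν : Word n r) (w : List (Fin n)) : Word n r := (ν.1, ν.2 ++ w)

/-- The point `ν⌢x` of `𝔠_{n,r}` determined by a word `ν` followed by `x ∈ 𝔠_n`. -/
def wCat {n r : ℕ} (ν : Word n r) (x : Cn n) : CNR n r :=
  (ν.1, fun i => if h : i < ν.2.length then ν.2.get ⟨i, h⟩ else x (i - ν.2.length))

/-- The cone `U_ν` of a word `ν`. -/
def cone {n r : ℕ} (ν : Word n r) : Set (CNR n r) :=
  {p | p.1 = ν.1 ∧ ∀ (i : ℕ) (h : i < ν.2.length), p.2 i = ν.2.get ⟨i, h⟩}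

/-- Membership in the Higman--Thompson group `G_{n,r}`: `g` is a prefix code map,
i.e. there are `k ≥ 1` and words `ν i`, `η i` whose cones partition `𝔠_{n,r}`
with `g(ν i ⌢ x) = η i ⌢ x` for all `i`, `x`. -/
def IsHigman {n r : ℕ} (g : Homeo n r) : Prop :=
  ∃ k : ℕ, 0 < k ∧ ∃ ν η : Fin k → Word n r,
    (∀ p : CNR n r, ∃! i : Fin k, p ∈ cone (ν i)) ∧
    (∀ p : CNR n r, ∃! i : Fin k, p ∈ cone (η i)) ∧
    (∀ (i : Fin k) (x : Cn n), g (wCat (ν i) x) = wCat (η i) x)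

/-- The Higman--Thompson group `G_{n,r}` as a set of homeomorphisms. -/
def higmanSet (n r : ℕ) : Set (Homeo n r) := {g | IsHigman g}

/-- Conjugation: in the paper's right-action notation this is `g ↦ h⁻¹ g h`
(as a left function, `x ↦ h (g (h⁻¹ x))`). -/
def conjH {n r : ℕ} (h g : Homeo n r) : Homeo n r := (h.symm.trans g).trans h

/-- `h` acts in the same fashion on `U_α` and `U_β`: there are words `α'`, `β'`
and a common local action `f` with `h(α⌢x) = α'⌢f(x)` and `h(β⌢x) = β'⌢f(x)`. -/
def SameFashion {n r : ℕ} (h : Homeo n r) (α β : Word n r) : Prop :=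
  ∃ (α' β' : Word n r) (f : Cn n → Cn n),
    (∀ x : Cn n, h (wCat α x) = wCat α' (f x)) ∧
    (∀ x : Cn n, h (wCat β x) = wCat β' (f x))

/-- Tail equivalence on `𝔠_{n,r}`. -/
def TailEq {n r : ℕ} (x y : CNR n r) : Prop :=
  ∃ (ν η : Word n r) (z : Cn n), x = wCat ν z ∧ y = wCat η z

/-- `h` is pointwise canonical. -/
def PtwiseCanonical {n r : ℕ} (h : Homeo n r) : Prop :=
  ∀ x : CNR n r, ∃ (η₁ η₂ : Word n r) (y : Cn n), x = wCat η₁ y ∧ h x = wCat η₂ y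

/-- `h` is densely canonical. -/
def DenselyCanonical {n r : ℕ} (h : Homeo n r) : Prop :=
  ∀ U : Set (CNR n r), IsOpen U → U.Nonempty →
    ∃ η ζ : Word n r, cone η ⊆ U ∧ ∀ x : Cn n, h (wCat η x) = wCat ζ x

/-- `h` belongs to `H_{n,r,∼}`: `x ∼ y` iff `h(x) ∼ h(y)`. -/
def PreservesTailEq {n r : ℕ} (h : Homeo n r) : Prop :=
  ∀ x y : CNR n r, TailEq x y ↔ TailEq (h x) (h y)

/-- `ν` is a prefix of `η`, i.e. `U_η ⊆ U_ν`. -/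
def WPrefix {n r : ℕ} (ν η : Word n r) : Prop := cone η ⊆ cone ν

/-- Two words are incomparable if neither is a prefix of the other. -/
def Incomp {n r : ℕ} (ν η : Word n r) : Prop := ¬ WPrefix ν η ∧ ¬ WPrefix η ν

/-!
By compactness, a homeomorphism lies in `G_{n,r}` as soon as it replaces a prefix near every point.
If `g` replaces `ν` by `η` and `h` acts in the same fashion on `U_ν` and `U_η`, then the conjugate
of `g` by `h` replaces a prefix near every point of `h(U_ν)`; so conjugation by a synchronizing `h`
preserves `G_{n,r}`. Conversely, if the conjugate of `g` replaces a prefix on a cone containing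
`h(U_ν)`, then `h` acts in the same fashion on `U_ν` and `U_η`. Applied to the element of `G_{n,r}`
that swaps two disjoint cones, this shows that `h` eventually acts in the same fashion below any
two words, and finitely many such comparisons give a uniform level.
-/

open Filter Topology

variable {n r : ℕ}

section Words

/-- The sequence `u⌢x`: the operation of `Stream'` on the type `𝔠_n` of plain functions. -/
def prepend (u : List (Fin n)) (x : Cn n) : Cn n := Stream'.appendStream' u x

lemma prepend_append (u v : List (Fin n)) (x : Cn n) :
    prepend (u ++ v) x = prepend u (prepend v x) :=
  Stream'.append_append_stream u v x

lemma prepend_apply_of_lt {u : List (Fin n)} {i : ℕ} (hi : i < u.length) (x : Cn n) :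
    prepend u x i = u[i] :=
  Stream'.get_append_left i u x hi

lemma prepend_apply_length_add (u : List (Fin n)) (x : Cn n) (i : ℕ) :
    prepend u x (u.length + i) = x i :=
  Stream'.get_append_right i u x

lemma prepend_right_injective (u : List (Fin n)) : Function.Injective (prepend u) :=
  fun x y => Stream'.append_right_injective u x y

lemma prepend_left_injective {u v : List (Fin n)} {x y : Cn n}
    (huv : prepend u x = prepend v y) (hlen : u.length = v.length) : u = v :=
  Stream'.append_left_injective u v x y huv hlen

lemma exists_eq_prepend (k : ℕ) (x : Cn n) : ∃ u y, u.length = k ∧ x = prepend u y :=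
  ⟨Stream'.take k x, Stream'.drop k x, Stream'.length_take k x,
    (Stream'.append_take_drop k x).symm⟩

lemma wCat_eq (ν : Word n r) (x : Cn n) : wCat ν x = (ν.1, prepend ν.2 x) := by
  refine Prod.ext rfl (funext fun i => ?_)
  by_cases hi : i < ν.2.length
  · simp only [wCat, hi, dite_true, prepend_apply_of_lt hi, List.get_eq_getElem]
  · obtain ⟨j, rfl⟩ := Nat.exists_eq_add_of_le (not_lt.1 hi)
    simp only [wCat, hi, dite_false, Nat.add_sub_cancel_left, prepend_apply_length_add]

lemma wCat_wApp (ν : Word n r) (w : List (Fin n)) (x : Cn n) :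
    wCat (wApp ν w) x = wCat ν (prepend w x) := by
  rw [wCat_eq, wCat_eq, wApp, prepend_append]

lemma wApp_wApp (ν : Word n r) (u w : List (Fin n)) :
    wApp (wApp ν u) w = wApp ν (u ++ w) := by
  rw [wApp, wApp, wApp, List.append_assoc]

lemma wCat_injective (ν : Word n r) : Function.Injective (wCat ν) := fun x y hxy => by
  rw [wCat_eq, wCat_eq] at hxy
  exact prepend_right_injective ν.2 (congrArg Prod.snd hxy)

lemma exists_wApp_of_wCat_eq {ν η : Word n r} {x y : Cn n} (hxy : wCat ν x = wCat η y)
    (hlen : ν.2.length ≤ η.2.length) : ∃ w, η = wApp ν w := by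
  obtain ⟨w, z, hw, rfl⟩ := exists_eq_prepend (η.2.length - ν.2.length) x
  rw [← wCat_wApp, wCat_eq, wCat_eq] at hxy
  obtain ⟨hfst, hsnd⟩ := Prod.mk.inj hxy
  refine ⟨w, (Prod.ext hfst (prepend_left_injective hsnd ?_)).symm⟩
  rw [wApp, List.length_append, hw, Nat.add_sub_cancel' hlen]

end Words

section Cones

lemma wCat_mem_cone (ν : Word n r) (x : Cn n) : wCat ν x ∈ cone ν :=
  ⟨rfl, fun _ hi => dif_pos hi⟩

lemma mem_cone_iff {ν : Word n r} {p : CNR n r} : p ∈ cone ν ↔ ∃ x, wCat ν x = p := by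
  refine ⟨fun ⟨hfst, hsnd⟩ => ?_, ?_⟩
  · obtain ⟨u, x, hu, hx⟩ := exists_eq_prepend ν.2.length p.2
    have hνu : ν.2 = u := List.ext_getElem hu.symm fun i hi hi' => by
      rw [← prepend_apply_of_lt hi' x, ← hx]
      exact (hsnd i hi).symm
    exact ⟨x, by rw [wCat_eq, hνu, ← hx, ← hfst]⟩
  · rintro ⟨x, rfl⟩
    exact wCat_mem_cone ν x

lemma mem_cone_ofFn {N : ℕ} {c : Fin r} {s : Fin N → Fin n} {p : CNR n r} :
    p ∈ cone (c, List.ofFn s) ↔ (c, s) = (p.1, fun j : Fin N => p.2 j) := by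
  simp only [cone, mem_ofPred_eq, List.length_ofFn, List.get_eq_getElem, List.getElem_ofFn,
    Prod.mk.injEq, funext_iff, Fin.forall_iff, eq_comm (a := c), eq_comm (a := s _)]

lemma disjoint_cone_cons {c c' : Fin r} {a a' : Fin n} (hne : (c, a) ≠ (c', a'))
    (u u' : List (Fin n)) :
    Disjoint (cone ((c, a :: u) : Word n r)) (cone (c', a' :: u')) := by
  refine Set.disjoint_left.2 fun p hp hp' => hne (Prod.ext (hp.1.symm.trans hp'.1) ?_)
  exact (hp.2 0 (Nat.succ_pos _)).symm.trans (hp'.2 0 (Nat.succ_pos _))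

lemma isClopen_cone (ν : Word n r) : IsClopen (cone ν) := by
  have hcone : cone ν = (fun p : CNR n r => p.1) ⁻¹' {ν.1} ∩
      ⋂ i : Fin ν.2.length, (fun p : CNR n r => p.2 i) ⁻¹' {ν.2.get i} := by
    ext p
    simp only [cone, mem_ofPred_eq, mem_inter_iff, mem_preimage, mem_singleton_iff, mem_iInter,
      Fin.forall_iff]
  rw [hcone]
  exact ((isClopen_discrete _).preimage continuous_fst).inter <|
    isClopen_iInter_of_finite fun i => (isClopen_discrete _).preimage (by fun_prop)

lemma continuous_wCat (ν : Word n r) : Continuous (wCat ν) := by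
  refine continuous_const.prodMk (continuous_pi fun i => ?_)
  split_ifs <;> fun_prop

lemma isOpenEmbedding_wCat (ν : Word n r) : IsOpenEmbedding (wCat ν) where
  toIsEmbedding := ((continuous_wCat ν).isClosedEmbedding (wCat_injective ν)).isEmbedding
  isOpen_range := by
    have hrange : range (wCat ν) = cone ν := Set.ext fun _ => mem_cone_iff.symm
    exact hrange ▸ (isClopen_cone ν).isOpen

lemma exists_cone_wApp_subset {U : Set (CNR n r)} (hU : IsOpen U) {ν : Word n r} {x : Cn n}
    (hx : wCat ν x ∈ U) : ∃ u y, x = prepend u y ∧ cone (wApp ν u) ⊆ U := by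
  obtain ⟨_, ⟨z, k, rfl⟩, hxz, hzU⟩ :=
    (PiNat.isTopologicalBasis_cylinders fun _ : ℕ => Fin n).exists_subset_of_mem_open
      (show x ∈ wCat ν ⁻¹' U from hx) (hU.preimage (continuous_wCat ν))
  obtain ⟨u, y, rfl, rfl⟩ := exists_eq_prepend k x
  refine ⟨u, y, rfl, fun p hp => ?_⟩
  obtain ⟨y', rfl⟩ := mem_cone_iff.1 hp
  rw [wCat_wApp]
  refine hzU (PiNat.mem_cylinder_iff.2 fun i hi => ?_)
  rw [prepend_apply_of_lt hi, ← prepend_apply_of_lt hi y]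
  exact PiNat.mem_cylinder_iff.1 hxz i hi

lemma exists_mem_cone_subset {U : Set (CNR n r)} (hU : IsOpen U) {p : CNR n r} (hp : p ∈ U) :
    ∃ ν, p ∈ cone ν ∧ cone ν ⊆ U := by
  obtain ⟨u, y, hy, hu⟩ := exists_cone_wApp_subset hU (ν := (p.1, [])) (x := p.2) hp
  refine ⟨_, mem_cone_iff.2 ⟨y, ?_⟩, hu⟩
  rw [wCat_wApp, ← hy]
  rfl

-- A Lebesgue number lemma: by compactness finitely many of the given cones cover the space.
lemma exists_forall_of_le_length [Nonempty (Fin n)] {P : Word n r → Prop}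
    (hP : ∀ ν u, P ν → P (wApp ν u)) (hcover : ∀ p, ∃ ν, p ∈ cone ν ∧ P ν) :
    ∃ N, ∀ ν : Word n r, N ≤ ν.2.length → P ν := by
  choose F hF hPF using hcover
  obtain ⟨t, ht⟩ := isCompact_univ.elim_finite_subcover (fun p => cone (F p))
    (fun p => (isClopen_cone _).isOpen) (fun p _ => mem_iUnion.2 ⟨p, hF p⟩)
  refine ⟨t.sup fun p => (F p).2.length, fun ν hν => ?_⟩
  obtain ⟨p, hpt, hp⟩ := mem_iUnion₂.1 (ht (mem_univ (wCat ν (Classical.arbitrary (Cn n)))))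
  obtain ⟨x, hx⟩ := mem_cone_iff.1 hp
  have hlen : (F p).2.length ≤ ν.2.length :=
    (Finset.le_sup (f := fun p => (F p).2.length) hpt).trans hν
  obtain ⟨w, rfl⟩ := exists_wApp_of_wCat_eq hx hlen
  exact hP _ _ (hPF p)

end Cones

section PrefixReplacement

/-- `g` maps `U_ν` onto `U_η` by replacing the prefix `ν` with `η`. -/
def ReplacesPrefix (g : CNR n r → CNR n r) (ν η : Word n r) : Prop :=
  ∀ x, g (wCat ν x) = wCat η x

/-- Every point has a cone neighbourhood on which `g` replaces a prefix. Among homeomorphisms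
this singles out the elements of `G_{n,r}`, without reference to partitions. -/
def LocallyReplacesPrefixes (g : CNR n r → CNR n r) : Prop :=
  ∀ p, ∃ ν η, p ∈ cone ν ∧ ReplacesPrefix g ν η

lemma ReplacesPrefix.wApp {g : CNR n r → CNR n r} {ν η : Word n r} (hg : ReplacesPrefix g ν η)
    (u : List (Fin n)) : ReplacesPrefix g (wApp ν u) (wApp η u) := fun x => by
  rw [wCat_wApp, hg, wCat_wApp]

lemma ReplacesPrefix.apply_mem_cone_iff {g : CNR n r → CNR n r} {ν η : Word n r}
    (hg : ReplacesPrefix g ν η) (hinj : Function.Injective g) {p : CNR n r} :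
    g p ∈ cone η ↔ p ∈ cone ν := by
  simp only [mem_cone_iff, ← hg _, hinj.eq_iff]

lemma LocallyReplacesPrefixes.continuous {g : CNR n r → CNR n r}
    (hg : LocallyReplacesPrefixes g) : Continuous g := by
  refine continuous_iff_continuousAt.2 fun p => ?_
  obtain ⟨ν, η, hp, hνη⟩ := hg p
  obtain ⟨x, rfl⟩ := mem_cone_iff.1 hp
  rw [← (isOpenEmbedding_wCat ν).continuousAt_iff, show g ∘ wCat ν = wCat η from funext hνη]
  exact (continuous_wCat η).continuousAt

lemma IsHigman.locallyReplacesPrefixes {g : Homeo n r} (hg : IsHigman g) :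
    LocallyReplacesPrefixes g := by
  obtain ⟨k, -, ν, η, hν, -, hνη⟩ := hg
  intro p
  obtain ⟨i, hi, -⟩ := hν p
  exact ⟨ν i, η i, hi, hνη i⟩

lemma LocallyReplacesPrefixes.isHigman [Nonempty (Fin n)] [Nonempty (Fin r)] {g : Homeo n r}
    (hg : LocallyReplacesPrefixes g) : IsHigman g := by
  obtain ⟨N, hN⟩ : ∃ N, ∀ ν : Word n r, N ≤ ν.2.length → ∃ η, ReplacesPrefix g ν η :=
    exists_forall_of_le_length (fun ν u ⟨η, hη⟩ => ⟨_, hη.wApp u⟩) fun p => by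
      obtain ⟨ν, η, hp, hνη⟩ := hg p
      exact ⟨ν, hp, η, hνη⟩
  let e := (Fintype.equivFin (Fin r × (Fin N → Fin n))).symm
  let ν : Fin _ → Word n r := fun i => ((e i).1, List.ofFn (e i).2)
  choose η hη using fun i => hN (ν i) (List.length_ofFn (f := (e i).2)).ge
  have hν : ∀ p, ∃! i, p ∈ cone (ν i) := fun p => by
    simpa only [ν, mem_cone_ofFn] using e.bijective.existsUnique _
  refine ⟨_, Fintype.card_pos, ν, η, hν, g.surjective.forall.2 fun q => ?_, hη⟩
  simpa only [(hη _).apply_mem_cone_iff g.injective] using hν q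

end PrefixReplacement

section Swap

/-- The map exchanging the cones `U_ν` and `U_η` by prefix replacement and fixing all other
points; it is an involution when the two cones are disjoint. -/
noncomputable def swapCones (ν η : Word n r) : CNR n r → CNR n r :=
  Function.extend (wCat ν) (wCat η) (Function.extend (wCat η) (wCat ν) id)

lemma swapCones_replacesPrefix_left (ν η : Word n r) : ReplacesPrefix (swapCones ν η) ν η :=
  (wCat_injective ν).extend_apply _ _

lemma swapCones_replacesPrefix_right {ν η : Word n r} (hd : Disjoint (cone ν) (cone η)) :
    ReplacesPrefix (swapCones ν η) η ν := fun x => by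
  have hν : wCat η x ∉ cone ν := Set.disjoint_right.1 hd (wCat_mem_cone η x)
  rw [swapCones, Function.extend_apply' _ _ _ (mt mem_cone_iff.2 hν),
    (wCat_injective η).extend_apply]

lemma swapCones_of_notMem {ν η : Word n r} {p : CNR n r} (hν : p ∉ cone ν) (hη : p ∉ cone η) :
    swapCones ν η p = p := by
  rw [swapCones, Function.extend_apply' _ _ _ (mt mem_cone_iff.2 hν),
    Function.extend_apply' _ _ _ (mt mem_cone_iff.2 hη), id]

lemma swapCones_involutive {ν η : Word n r} (hd : Disjoint (cone ν) (cone η)) :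
    Function.Involutive (swapCones ν η) := fun p => by
  by_cases hν : p ∈ cone ν
  · obtain ⟨x, rfl⟩ := mem_cone_iff.1 hν
    rw [swapCones_replacesPrefix_left, swapCones_replacesPrefix_right hd]
  by_cases hη : p ∈ cone η
  · obtain ⟨x, rfl⟩ := mem_cone_iff.1 hη
    rw [swapCones_replacesPrefix_right hd, swapCones_replacesPrefix_left]
  · rw [swapCones_of_notMem hν hη, swapCones_of_notMem hν hη]

lemma swapCones_locallyReplacesPrefixes {ν η : Word n r} (hd : Disjoint (cone ν) (cone η)) :
    LocallyReplacesPrefixes (swapCones ν η) := fun p => by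
  by_cases hν : p ∈ cone ν
  · exact ⟨ν, η, hν, swapCones_replacesPrefix_left ν η⟩
  by_cases hη : p ∈ cone η
  · exact ⟨η, ν, hη, swapCones_replacesPrefix_right hd⟩
  · obtain ⟨μ, hp, hμ⟩ := exists_mem_cone_subset
      ((isClopen_cone ν).compl.inter (isClopen_cone η).compl).isOpen ⟨hν, hη⟩
    refine ⟨μ, μ, hp, fun x => ?_⟩
    have hx := hμ (wCat_mem_cone μ x)
    exact swapCones_of_notMem hx.1 hx.2

lemma exists_isHigman_replacesPrefix [Nonempty (Fin n)] {ν η : Word n r}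
    (hd : Disjoint (cone ν) (cone η)) : ∃ g : Homeo n r, IsHigman g ∧ ReplacesPrefix g ν η := by
  have hlocal := swapCones_locallyReplacesPrefixes hd
  have : Nonempty (Fin r) := ⟨ν.1⟩
  let g : Homeo n r :=
    { (swapCones_involutive hd).toPerm with
      continuous_toFun := hlocal.continuous
      continuous_invFun := hlocal.continuous }
  exact ⟨g, LocallyReplacesPrefixes.isHigman (g := g) hlocal, swapCones_replacesPrefix_left ν η⟩

end Swap

section SameFashion

variable {h g : Homeo n r} {ν η ζ : Word n r}

lemma SameFashion.symm (hs : SameFashion h ν η) : SameFashion h η ν := by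
  obtain ⟨α, β, f, hα, hβ⟩ := hs
  exact ⟨β, α, f, hβ, hα⟩

lemma SameFashion.trans [Nonempty (Fin n)] (hνη : SameFashion h ν η) (hηζ : SameFashion h η ζ) :
    SameFashion h ν ζ := by
  obtain ⟨α, β, f, hα, hβ⟩ := hνη
  obtain ⟨β', γ, f', hβ', hγ⟩ := hηζ
  have hff' : ∀ x, wCat β (f x) = wCat β' (f' x) := fun x => (hβ x).symm.trans (hβ' x)
  let x₀ := Classical.arbitrary (Cn n)
  rcases le_total β.2.length β'.2.length with hlen | hlen
  · obtain ⟨u, rfl⟩ := exists_wApp_of_wCat_eq (hff' x₀) hlen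
    refine ⟨wApp α u, γ, f', fun x => ?_, hγ⟩
    rw [hα, wCat_wApp, wCat_injective β ((hff' x).trans (wCat_wApp β u _))]
  · obtain ⟨u, rfl⟩ := exists_wApp_of_wCat_eq (hff' x₀).symm hlen
    refine ⟨α, wApp γ u, f, hα, fun x => ?_⟩
    rw [hγ, wCat_wApp, wCat_injective β' ((hff' x).symm.trans (wCat_wApp β' u _))]

lemma conjH_apply_apply (h g : Homeo n r) (p : CNR n r) : conjH h g (h p) = h (g p) := by
  rw [conjH, Homeomorph.trans_apply, Homeomorph.trans_apply, Homeomorph.symm_apply_apply]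

lemma conjH_symm_conjH (h g : Homeo n r) : conjH h.symm (conjH h g) = g := by
  ext p : 1
  simp [conjH]

lemma conjH_conjH_symm (h g : Homeo n r) : conjH h (conjH h.symm g) = g :=
  conjH_symm_conjH h.symm g

lemma SameFashion.conjH_replacesPrefix (hs : SameFashion h ν η) (hg : ReplacesPrefix g ν η)
    {p : CNR n r} (hp : p ∈ cone ν) :
    ∃ α β, h p ∈ cone α ∧ ReplacesPrefix (conjH h g) α β := by
  obtain ⟨α, β, f, hα, hβ⟩ := hs
  obtain ⟨x, rfl⟩ := mem_cone_iff.1 hp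
  have hopen : IsOpen (h '' cone ν) := h.isOpenMap _ (isClopen_cone ν).isOpen
  obtain ⟨u, y, hy, hu⟩ := exists_cone_wApp_subset hopen (ν := α) (x := f x)
    (hα x ▸ mem_image_of_mem h hp)
  refine ⟨wApp α u, wApp β u, mem_cone_iff.2 ⟨y, by rw [wCat_wApp, ← hy, hα]⟩, fun z => ?_⟩
  obtain ⟨q, hq, hqz⟩ := hu (wCat_mem_cone (wApp α u) z)
  obtain ⟨t, rfl⟩ := mem_cone_iff.1 hq
  have hft : f t = prepend u z := wCat_injective α (by rw [← hα, hqz, wCat_wApp])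
  rw [← hqz, conjH_apply_apply, hg, hβ, hft, wCat_wApp]

lemma sameFashion_of_conjH_replacesPrefix {α β : Word n r} (hg : ReplacesPrefix g ν η)
    (hαβ : ReplacesPrefix (conjH h g) α β) (hνα : MapsTo h (cone ν) (cone α)) :
    SameFashion h ν η := by
  choose f hf using fun x => mem_cone_iff.1 (hνα (wCat_mem_cone ν x))
  refine ⟨α, β, f, fun x => (hf x).symm, fun x => ?_⟩
  rw [← hg, ← conjH_apply_apply, ← hf, hαβ]

end SameFashion

section Synchronization

variable {h : Homeo n r} {ν η ζ : Word n r}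

/-- `h` acts in the same fashion below `ν` and below `η` after sufficiently many further letters,
whatever these letters are. -/
def EventuallySameFashion (h : Homeo n r) (ν η : Word n r) : Prop :=
  ∀ᶠ m in atTop, ∀ w : List (Fin n), w.length = m → SameFashion h (wApp ν w) (wApp η w)

/-- `h` is synchronizing at level `m`: its local action at a word depends only on the last `m`
letters of that word. -/
def SynchronizingAt (h : Homeo n r) (m : ℕ) : Prop :=
  ∀ w : List (Fin n), w.length = m → ∀ ν η : Word n r, SameFashion h (wApp ν w) (wApp η w)

lemma EventuallySameFashion.trans [Nonempty (Fin n)] (hνη : EventuallySameFashion h ν η)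
    (hηζ : EventuallySameFashion h η ζ) : EventuallySameFashion h ν ζ := by
  filter_upwards [hνη, hηζ] with m hm hm' w hw using (hm w hw).trans (hm' w hw)

lemma SynchronizingAt.mono {m m' : ℕ} (hm : SynchronizingAt h m) (hmm' : m ≤ m') :
    SynchronizingAt h m' := fun w hw ν η => by
  rw [← List.take_append_drop (m' - m) w, ← wApp_wApp, ← wApp_wApp]
  exact hm _ (by rw [List.length_drop]; omega) _ _

lemma eventuallySameFashion_of_disjoint [Nonempty (Fin n)]
    (hconj : MapsTo (conjH h) (higmanSet n r) (higmanSet n r))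
    (hd : Disjoint (cone ν) (cone η)) : EventuallySameFashion h ν η := by
  obtain ⟨g, hg, hνη⟩ := exists_isHigman_replacesPrefix hd
  obtain ⟨N, hN⟩ : ∃ N, ∀ μ : Word n r, N ≤ μ.2.length →
      ∃ α β, MapsTo h (cone μ) (cone α) ∧ ReplacesPrefix (conjH h g) α β := by
    refine exists_forall_of_le_length ?_ fun p => ?_
    · rintro μ u ⟨α, β, hμα, hαβ⟩
      refine ⟨α, β, fun q hq => hμα ?_, hαβ⟩
      obtain ⟨x, rfl⟩ := mem_cone_iff.1 hq
      exact wCat_wApp μ u x ▸ wCat_mem_cone μ _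
    · obtain ⟨α, β, hα, hαβ⟩ := IsHigman.locallyReplacesPrefixes (hconj hg) (h p)
      obtain ⟨μ, hp, hμ⟩ :=
        exists_mem_cone_subset ((isClopen_cone α).isOpen.preimage h.continuous) hα
      exact ⟨μ, hp, α, β, hμ, hαβ⟩
  filter_upwards [eventually_ge_atTop N] with m hm w hw
  obtain ⟨α, β, hα, hαβ⟩ := hN (wApp ν w) (by simp only [wApp, List.length_append]; omega)
  exact sameFashion_of_conjH_replacesPrefix (hνη.wApp w) hαβ hα

lemma eventuallySameFashion_of_ne_nil [Nontrivial (Fin n)]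
    (hconj : MapsTo (conjH h) (higmanSet n r) (higmanSet n r))
    (hν : ν.2 ≠ []) (hη : η.2 ≠ []) : EventuallySameFashion h ν η := by
  obtain ⟨c, u⟩ := ν
  obtain ⟨c', u'⟩ := η
  obtain ⟨a, u, rfl⟩ := List.exists_cons_of_ne_nil hν
  obtain ⟨a', u', rfl⟩ := List.exists_cons_of_ne_nil hη
  have hdisjoint : ∀ {d d' : Fin r} {b b' : Fin n} (v v' : List (Fin n)), (d, b) ≠ (d', b') →
      EventuallySameFashion h (d, b :: v) (d', b' :: v') := fun v v' hne =>
    eventuallySameFashion_of_disjoint hconj (disjoint_cone_cons hne v v')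
  by_cases heq : (c, a) = (c', a')
  · obtain ⟨rfl, rfl⟩ := Prod.mk.inj heq
    -- The cone of a word starting with another letter is disjoint from both.
    obtain ⟨b, hb⟩ := exists_ne a
    have hne : (c, a) ≠ (c, b) := fun hab => hb (Prod.mk.inj hab).2.symm
    exact (hdisjoint u [] hne).trans (hdisjoint [] u' hne.symm)
  · exact hdisjoint u u' heq

-- The threshold is uniform because a word grows letter by letter out of one-letter words, and
-- each letter appended to `ρ` can be absorbed: only finitely many comparisons are involved.
lemma exists_forall_sameFashion_of_ne_nil [Nonempty (Fin n)] {ρ : Word n r} (hρ : ρ.2 ≠ [])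
    (hev : ∀ ν η : Word n r, ν.2 ≠ [] → η.2 ≠ [] → EventuallySameFashion h ν η) :
    ∃ M, ∀ ν : Word n r, ν.2 ≠ [] → ∀ w, M ≤ w.length →
      SameFashion h (wApp ν w) (wApp ρ w) := by
  have hletters : ∀ᶠ m in atTop, ∀ (t : Fin r × Fin n) (w : List (Fin n)), w.length = m →
      SameFashion h (wApp (t.1, [t.2]) w) (wApp ρ w) :=
    eventually_all.2 fun t => hev _ _ (List.cons_ne_nil _ _) hρ
  have habsorb : ∀ᶠ m in atTop, ∀ (b : Fin n) (w : List (Fin n)), w.length = m →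
      SameFashion h (wApp (wApp ρ [b]) w) (wApp ρ w) :=
    eventually_all.2 fun b => hev _ _ (List.append_ne_nil_of_left_ne_nil hρ _) hρ
  obtain ⟨M, hM⟩ := eventually_atTop.1 (hletters.and habsorb)
  refine ⟨M, fun ⟨c, u⟩ hu => ?_⟩
  induction u using List.reverseRecOn with
  | nil => exact absurd rfl hu
  | append_singleton u b ih =>
    intro w hw
    rcases eq_or_ne u [] with rfl | hu
    · exact (hM _ hw).1 (c, b) w rfl
    · have hbw := ih hu (b :: w) (hw.trans (Nat.le_succ _))
      rw [← List.singleton_append, ← wApp_wApp, ← wApp_wApp] at hbw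
      exact hbw.trans ((hM _ hw).2 b w rfl)

lemma exists_synchronizingAt_of_eventuallySameFashion [Nonempty (Fin n)] [Nonempty (Fin r)]
    (hev : ∀ ν η : Word n r, ν.2 ≠ [] → η.2 ≠ [] → EventuallySameFashion h ν η) :
    ∃ m, SynchronizingAt h m := by
  let ρ : Word n r := (Classical.arbitrary _, [Classical.arbitrary _])
  have hρ : ρ.2 ≠ [] := List.cons_ne_nil _ _
  obtain ⟨M, hM⟩ := exists_forall_sameFashion_of_ne_nil hρ hev
  refine ⟨M + 1, ?_⟩
  rintro (_ | ⟨b, w⟩) hw ν η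
  · exact absurd hw M.succ_ne_zero.symm
  · have hνρ : ∀ μ, SameFashion h (wApp μ (b :: w)) (wApp ρ w) := fun μ => by
      rw [← List.singleton_append, ← wApp_wApp]
      exact hM _ (List.append_ne_nil_of_right_ne_nil _ (List.cons_ne_nil _ _)) w
        (Nat.succ.inj hw).ge
    exact (hνρ ν).trans (hνρ η).symm

lemma SynchronizingAt.mapsTo_conjH [Nonempty (Fin n)] [Nonempty (Fin r)] {m : ℕ}
    (hm : SynchronizingAt h m) : MapsTo (conjH h) (higmanSet n r) (higmanSet n r) := by
  refine fun g hg => LocallyReplacesPrefixes.isHigman (h.surjective.forall.2 fun p => ?_)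
  obtain ⟨ν, η, hp, hνη⟩ := IsHigman.locallyReplacesPrefixes hg p
  obtain ⟨x, rfl⟩ := mem_cone_iff.1 hp
  obtain ⟨w, y, hw, rfl⟩ := exists_eq_prepend m x
  exact (hm w hw ν η).conjH_replacesPrefix (hνη.wApp w) (wCat_wApp ν w y ▸ wCat_mem_cone _ y)

theorem mapsTo_conjH_higmanSet_iff [Nontrivial (Fin n)] [Nonempty (Fin r)] :
    MapsTo (conjH h) (higmanSet n r) (higmanSet n r) ↔ ∃ m, SynchronizingAt h m :=
  ⟨fun hconj => exists_synchronizingAt_of_eventuallySameFashion fun _ _ =>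
    eventuallySameFashion_of_ne_nil hconj, fun ⟨_, hm⟩ => hm.mapsTo_conjH⟩

lemma conjH_image_eq_iff {S : Set (Homeo n r)} :
    conjH h '' S = S ↔ MapsTo (conjH h) S S ∧ MapsTo (conjH h.symm) S S := by
  rw [Subset.antisymm_iff, ← mapsTo_iff_image_subset,
    image_eq_preimage_of_inverse (conjH_symm_conjH h) (conjH_conjH_symm h)]
  rfl

end Synchronization

theorem bisynchronizing_characterisation_general (n r : ℕ) (hn : 2 ≤ n) (hr1 : 1 ≤ r)
    (h : Homeo n r) :
    conjH h '' higmanSet n r = higmanSet n r ↔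
      ∃ m : ℕ, ∀ w : List (Fin n), w.length = m → ∀ ν η : Word n r,
        SameFashion h (wApp ν w) (wApp η w) ∧
        SameFashion h.symm (wApp ν w) (wApp η w) := by
  have : Nontrivial (Fin n) := Fin.nontrivial_iff_two_le.2 hn
  have : Nonempty (Fin r) := Fin.pos_iff_nonempty.1 hr1
  rw [conjH_image_eq_iff, mapsTo_conjH_higmanSet_iff, mapsTo_conjH_higmanSet_iff]
  simp only [forall_and]
  constructor
  · rintro ⟨⟨m, hm⟩, ⟨m', hm'⟩⟩
    exact ⟨max m m', hm.mono (le_max_left m m'), hm'.mono (le_max_right m m')⟩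
  · rintro ⟨m, hm, hm'⟩
    exact ⟨⟨m, hm⟩, ⟨m, hm'⟩⟩

/-- `h⁻¹ G_{n,r} h = G_{n,r}` iff `h` is bi-synchronizing:
there is `m` such that for every word `w` of length `m` and all words `ν`, `η`,
both `h` and `h⁻¹` act in the same fashion on `U_{ν⌢w}` and `U_{η⌢w}`. -/
theorem bisynchronizing_characterisation (n r : ℕ) (hn : 2 ≤ n) (hr1 : 1 ≤ r)
    (hrn : r < n) (h : Homeo n r) :
    conjH h '' higmanSet n r = higmanSet n r ↔
      ∃ m : ℕ, ∀ w : List (Fin n), w.length = m → ∀ ν η : Word n r,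
        SameFashion h (wApp ν w) (wApp η w) ∧
        SameFashion h.symm (wApp ν w) (wApp η w) :=
  bisynchronizing_characterisation_general n r hn hr1 h

end HigmanAut
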